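/- arXiv:2312.09889 — 2 statements merged into one kernel-verified Lean document; each statement's English description precedes it below -/
import Mathlib

section
/- For every small category C, the last-vertex functor L : Δ/N(C) → C, sending an object ([n], σ) (with σ : [n] → C a functor) to the object σ(n) and a morphism a : ([n], σ) → ([m], τ) to the morphism τ(a(n) ≤ m) : σ(n) → τ(m) (the image under τ of the unique morphism a(n) → m in [m]), exhibits C as the localization of Δ/N(C) at the class of last-vertex morphisms; i.e. L satisfies Functor.IsLocalization with respect to lv. -/
open CategoryTheory Simplicial

universe u

/-- An object of the category of simplices `Δ/X` of a simplicial set `X`: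
a pair `([n], x)` with `x ∈ X_n`. -/
structure SplxOver (X : SSet.{u}) where
  obj : SimplexCategory
  simplex : X.obj (Opposite.op obj)

/-- A morphism `([n], x) ⟶ ([m], y)` of `Δ/X`: a monotone map `a : [n] → [m]` with
`X(a)(y) = x`. -/
@[ext]
structure SplxOver.Hom {X : SSet.{u}} (A B : SplxOver X) where
  map : A.obj ⟶ B.obj
  fac : X.map map.op B.simplex = A.simplex

instance {X : SSet.{u}} : Category (SplxOver X) where
  Hom := SplxOver.Hom
  id A := ⟨𝟙 A.obj, by rw [op_id, FunctorToTypes.map_id_apply]⟩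
  comp := fun {A B C} (f : SplxOver.Hom A B) (g : SplxOver.Hom B C) =>
    ⟨f.map ≫ g.map, by rw [op_comp, FunctorToTypes.map_comp_apply, g.fac, f.fac]⟩
  id_comp := fun {A B} (f : SplxOver.Hom A B) => by
    apply SplxOver.Hom.ext; exact Category.id_comp f.map
  comp_id := fun {A B} (f : SplxOver.Hom A B) => by
    apply SplxOver.Hom.ext; exact Category.comp_id f.map
  assoc f g h := by
    apply SplxOver.Hom.ext; exact Category.assoc _ _ _

/-- A morphism of `Δ/X` is a last-vertex morphism if it preserves the last vertex. -/
def lastVertex (X : SSet.{u}) : MorphismProperty (SplxOver X) :=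
  fun _ _ a => a.map.toOrderHom (Fin.last _) = Fin.last _

universe w v'

/-- For a morphism `f : ([n], σ) ⟶ ([m], τ)` in the category of simplices of the nerve of
a category `C`, the object `σ(n)` equals `τ(a(n))`. -/
lemma nerve_simplex_obj_eq {C : Type w} [Category.{v'} C]
    {A B : SplxOver (nerve C)} (f : A ⟶ B) :
    A.simplex.obj (Fin.last A.obj.len) =
      B.simplex.obj (f.map.toOrderHom (Fin.last A.obj.len)) := by
  rw [← f.fac]
  rfl

/-! A functor `F` inverting the last-vertex morphisms of `Δ/N(C)` sends an arrow `φ : c ⟶ d`, seen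
as a `1`-simplex, to `F(source φ) ≫ F(target φ)⁻¹ : F(c) ⟶ F(d)`, because the inclusion of the
target is a last-vertex morphism. These maps relate the images under `F` of any two vertices of any
simplex; applied to the `2`-simplex `(φ, ψ)`, whose last vertex `F` inverts, this shows that they
compose. Hence `F` induces a functor on `C`, and the last vertices `σ(n) ⟶ ([n], σ)` identify its
composite with the last-vertex functor with `F`. This factorization is essentially unique, since the
last-vertex functor sends `source φ` to `φ` and `target φ` to an identity. -/

namespace SplxOver

variable {C : Type w} [Category.{v'} C]

section LastVertexFunctor

variable {A B : SplxOver (nerve C)}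

/-- An object `([n], σ)` of `Δ/N(C)` as the functor `σ : [n] ⥤ C`. -/
def toFunctor (A : SplxOver (nerve C)) : ComposableArrows C A.obj.len := A.simplex

lemma toFunctor_obj_eq (f : A ⟶ B) (i : Fin (A.obj.len + 1)) :
    A.toFunctor.obj i = B.toFunctor.obj (f.map.toOrderHom i) :=
  Functor.congr_obj f.fac.symm i

lemma toFunctor_map_eq (f : A ⟶ B) {i j : Fin (A.obj.len + 1)} (hij : i ≤ j) :
    A.toFunctor.map (homOfLE hij) = eqToHom (toFunctor_obj_eq f i) ≫
      B.toFunctor.map (homOfLE (f.map.toOrderHom.monotone hij)) ≫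
        eqToHom (toFunctor_obj_eq f j).symm :=
  Functor.congr_hom f.fac.symm (homOfLE hij)

/-- The last-vertex functor `Δ/N(C) ⥤ C`, sending `([n], σ)` to `σ(n)`. -/
def lastVertexFunctor (C : Type w) [Category.{v'} C] : SplxOver (nerve C) ⥤ C where
  obj A := A.toFunctor.obj (Fin.last A.obj.len)
  map {_ B} f := eqToHom (toFunctor_obj_eq f _) ≫ B.toFunctor.map (homOfLE (Fin.le_last _))
  map_id A := (Category.id_comp _).trans (A.toFunctor.map_id _)
  map_comp {A B E} f g := by
    simp only [toFunctor_map_eq g, Category.assoc, eqToHom_trans_assoc, eqToHom_refl,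
      Category.id_comp, ← Functor.map_comp]
    rfl

lemma lastVertexFunctor_map (f : A ⟶ B) :
    (lastVertexFunctor C).map f =
      eqToHom (toFunctor_obj_eq f _) ≫ B.toFunctor.map (homOfLE (Fin.le_last _)) :=
  rfl

lemma isInvertedBy_lastVertexFunctor :
    (lastVertex (nerve C)).IsInvertedBy (lastVertexFunctor C) := by
  intro A B f hf
  have isIso_le_last : IsIso (homOfLE (Fin.le_last (f.map.toOrderHom (Fin.last _)))) :=
    ⟨homOfLE hf.ge, Subsingleton.elim _ _, Subsingleton.elim _ _⟩
  have isIso_map : IsIso (eqToHom (toFunctor_obj_eq f (Fin.last _)) ≫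
      B.toFunctor.map (homOfLE (Fin.le_last _))) := inferInstance
  exact isIso_map

end LastVertexFunctor

section Simplices

/-- The object `([n], σ)` of `Δ/N(C)` given by a functor `σ : [n] ⥤ C`. -/
def ofComposable {n : ℕ} (σ : ComposableArrows C n) : SplxOver (nerve C) := ⟨⦋n⦌, σ⟩

/-- The `0`-simplex of the nerve of `C` at an object `c`. -/
abbrev point (c : C) : SplxOver (nerve C) := ofComposable (ComposableArrows.mk₀ c)

/-- The `1`-simplex of the nerve of `C` given by a morphism `φ`. -/
abbrev arrow {c d : C} (φ : c ⟶ d) : SplxOver (nerve C) := ofComposable (ComposableArrows.mk₁ φ)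

variable {n : ℕ} (σ : ComposableArrows C n)

/-- The `i`-th vertex of `([n], σ)`, as a morphism of `Δ/N(C)`. Its source is the point of any
object `c` with `σ(i) = c`, so that vertices compose without transport. -/
def vertex (i : Fin (n + 1)) {c : C} (h : σ.obj i = c) : point c ⟶ ofComposable σ where
  map := SimplexCategory.const ⦋0⦌ ⦋n⦌ i
  fac := ComposableArrows.ext₀ h

/-- The edge from the `i`-th to the `j`-th vertex of `([n], σ)`, as a morphism of `Δ/N(C)`. As for
`vertex`, its source may be any arrow `φ` that agrees with `σ(i ≤ j)` up to an equality
`σ(i) = c`. -/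
def edge {i j : Fin (n + 1)} (hij : i ≤ j) {c : C} {φ : c ⟶ σ.obj j} (hi : σ.obj i = c)
    (hφ : eqToHom hi.symm ≫ σ.map (homOfLE hij) = φ) : arrow φ ⟶ ofComposable σ where
  map := SimplexCategory.mkOfLe i j hij
  fac := ComposableArrows.ext₁ hi rfl (by
    subst hi hφ
    exact ((Category.id_comp _).trans ((Category.comp_id _).trans (Category.id_comp _))).symm)

lemma lastVertex_vertex_last {c : C} (h : σ.obj (Fin.last n) = c) :
    lastVertex (nerve C) (vertex σ (Fin.last n) h) :=
  rfl

/-- The inclusion of the source of `φ` in the corresponding `1`-simplex. -/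
def source {c d : C} (φ : c ⟶ d) : point c ⟶ arrow φ := vertex (ComposableArrows.mk₁ φ) 0 rfl

/-- The inclusion of the target of `φ` in the corresponding `1`-simplex. -/
def target {c d : C} (φ : c ⟶ d) : point d ⟶ arrow φ := vertex (ComposableArrows.mk₁ φ) 1 rfl

lemma lastVertex_target {c d : C} (φ : c ⟶ d) : lastVertex (nerve C) (target φ) :=
  rfl

lemma lastVertexFunctor_map_source {c d : C} (φ : c ⟶ d) :
    (lastVertexFunctor C).map (source φ) = φ :=
  Category.id_comp φ

lemma lastVertexFunctor_map_target {c d : C} (φ : c ⟶ d) :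
    (lastVertexFunctor C).map (target φ) = 𝟙 d :=
  Category.id_comp (𝟙 d)

/-- The last vertex of a simplex `A`, as a morphism of `Δ/N(C)`. -/
def vertexLast (A : SplxOver (nerve C)) : point ((lastVertexFunctor C).obj A) ⟶ A :=
  vertex A.toFunctor (Fin.last _) rfl

lemma lastVertex_vertexLast (A : SplxOver (nerve C)) : lastVertex (nerve C) (vertexLast A) :=
  rfl

lemma vertexLast_comp {A B : SplxOver (nerve C)} (f : A ⟶ B) :
    vertexLast A ≫ f = vertex B.toFunctor (f.map.toOrderHom (Fin.last A.obj.len))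
      (toFunctor_obj_eq f (Fin.last A.obj.len)).symm :=
  rfl

end Simplices

section Desc

variable {D : Type*} [Category* D] (F : SplxOver (nerve C) ⥤ D)
  (hF : (lastVertex (nerve C)).IsInvertedBy F)

/-- The action on arrows of the functor `C ⥤ D` induced by a functor `F : Δ/N(C) ⥤ D` inverting
the last-vertex morphisms. -/
noncomputable def descMap {c d : C} (φ : c ⟶ d) : F.obj (point c) ⟶ F.obj (point d) :=
  haveI := hF _ (lastVertex_target φ)
  F.map (source φ) ≫ inv (F.map (target φ))

lemma descMap_comp_map_target {c d : C} (φ : c ⟶ d) :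
    descMap F hF φ ≫ F.map (target φ) = F.map (source φ) := by
  have := hF _ (lastVertex_target φ)
  simp only [descMap, Category.assoc, IsIso.inv_hom_id, Category.comp_id]

lemma descMap_comp_map_vertex {n : ℕ} (σ : ComposableArrows C n) {i j : Fin (n + 1)}
    (hij : i ≤ j) {c : C} {φ : c ⟶ σ.obj j} (hi : σ.obj i = c)
    (hφ : eqToHom hi.symm ≫ σ.map (homOfLE hij) = φ) :
    descMap F hF φ ≫ F.map (vertex σ j rfl) = F.map (vertex σ i hi) := by
  have source_edge : vertex σ i hi = source φ ≫ edge σ hij hi hφ := rfl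
  have target_edge : vertex σ j rfl = target φ ≫ edge σ hij hi hφ := rfl
  rw [source_edge, target_edge, F.map_comp, F.map_comp, ← Category.assoc,
    descMap_comp_map_target]

lemma descMap_id (c : C) : descMap F hF (𝟙 c) = 𝟙 (F.obj (point c)) := by
  let v : point c ⟶ point c := vertex (.mk₀ c) 0 rfl
  have : IsIso (F.map v) := hF _ (lastVertex_vertex_last _ rfl)
  have h : descMap F hF (𝟙 c) ≫ F.map v = F.map v :=
    descMap_comp_map_vertex F hF (.mk₀ c) le_rfl rfl (Category.id_comp _)
  rw [← cancel_mono (F.map v), h, Category.id_comp]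

lemma descMap_comp {c d e : C} (φ : c ⟶ d) (ψ : d ⟶ e) :
    descMap F hF (φ ≫ ψ) = descMap F hF φ ≫ descMap F hF ψ := by
  let σ : ComposableArrows C 2 := .mk₂ φ ψ
  let v₀ : point c ⟶ ofComposable σ := vertex σ 0 rfl
  let v₁ : point d ⟶ ofComposable σ := vertex σ 1 rfl
  let v₂ : point e ⟶ ofComposable σ := vertex σ 2 rfl
  have h₀₁ : descMap F hF φ ≫ F.map v₁ = F.map v₀ :=
    descMap_comp_map_vertex F hF σ (show 0 ≤ 1 by decide) rfl (Category.id_comp _)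
  have h₁₂ : descMap F hF ψ ≫ F.map v₂ = F.map v₁ :=
    descMap_comp_map_vertex F hF σ (show 1 ≤ 2 by decide) rfl (Category.id_comp _)
  have h₀₂ : descMap F hF (φ ≫ ψ) ≫ F.map v₂ = F.map v₀ :=
    descMap_comp_map_vertex F hF σ (show 0 ≤ 2 by decide) rfl (Category.id_comp _)
  have : IsIso (F.map v₂) := hF _ (lastVertex_vertex_last σ rfl)
  rw [← cancel_mono (F.map v₂), Category.assoc, h₁₂, h₀₁, h₀₂]

/-- The functor `C ⥤ D` induced by a functor `F : Δ/N(C) ⥤ D` inverting the last-vertex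
morphisms. -/
noncomputable def desc : C ⥤ D where
  obj c := F.obj (point c)
  map φ := descMap F hF φ
  map_id := descMap_id F hF
  map_comp := descMap_comp F hF

lemma descMap_lastVertexFunctor_map {A B : SplxOver (nerve C)} (f : A ⟶ B) :
    descMap F hF ((lastVertexFunctor C).map f) ≫ F.map (vertexLast B) =
      F.map (vertexLast A) ≫ F.map f := by
  rw [← F.map_comp, vertexLast_comp]
  exact descMap_comp_map_vertex F hF B.toFunctor (Fin.le_last _) _ rfl

/-- The factorization of `F` through the last-vertex functor, with component at `([n], σ)` the
image under `F` of the last vertex. -/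
noncomputable def lastVertexFunctorCompDescIso : lastVertexFunctor C ⋙ desc F hF ≅ F :=
  NatIso.ofComponents
    (fun A =>
      haveI := hF _ (lastVertex_vertexLast A)
      (asIso (F.map (vertexLast A)) :))
    (descMap_lastVertexFunctor_map F hF)

end Desc

section Uniqueness

variable {D : Type*} [Category* D] {K K' : C ⥤ D}

lemma app_point_naturality (α : lastVertexFunctor C ⋙ K ⟶ lastVertexFunctor C ⋙ K')
    {c d : C} (φ : c ⟶ d) :
    K.map φ ≫ α.app (point d) = α.app (point c) ≫ K'.map φ := by
  let β (e : C) : K.obj e ⟶ K'.obj e := α.app (point e)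
  let γ : K.obj d ⟶ K'.obj d := α.app (arrow φ)
  have at_source : K.map φ ≫ γ = β c ≫ K'.map φ :=
    lastVertexFunctor_map_source φ ▸ α.naturality (source φ)
  have at_target : K.map (𝟙 d) ≫ γ = β d ≫ K'.map (𝟙 d) :=
    lastVertexFunctor_map_target φ ▸ α.naturality (target φ)
  have γ_eq : γ = β d := by
    rwa [K.map_id, Category.id_comp, K'.map_id, Category.comp_id] at at_target
  rwa [γ_eq] at at_source

/-- Isomorphic composites with the last-vertex functor come from isomorphic functors. -/
def isoOfLastVertexFunctorCompIso (α : lastVertexFunctor C ⋙ K ≅ lastVertexFunctor C ⋙ K') :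
    K ≅ K' :=
  NatIso.ofComponents (fun c => α.app (point c)) (app_point_naturality α.hom)

end Uniqueness

theorem isLocalization_lastVertexFunctor (C : Type w) [Category.{v'} C] :
    (lastVertexFunctor C).IsLocalization (lastVertex (nerve C)) := by
  let W := lastVertex (nerve C)
  let L := lastVertexFunctor C
  let P : W.Localization ⥤ C := Localization.lift L isInvertedBy_lastVertexFunctor W.Q
  let G : C ⥤ W.Localization := desc W.Q W.Q_inverts
  let compP : W.Q ⋙ P ≅ L := Localization.fac _ _ _
  let compG : L ⋙ G ≅ W.Q := lastVertexFunctorCompDescIso _ _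
  let η : 𝟭 W.Localization ≅ P ⋙ G :=
    Localization.liftNatIso W.Q W W.Q (L ⋙ G) _ _ compG.symm
  let ε : G ⋙ P ≅ 𝟭 C := isoOfLastVertexFunctorCompIso <|
    (Functor.associator L G P).symm ≪≫ Functor.isoWhiskerRight compG P ≪≫ compP ≪≫
      L.rightUnitor.symm
  exact .of_equivalence_target W.Q W L (.mk P G η ε) compP

end SplxOver

/-- for every category `C`, the last-vertex functor `Δ/N(C) ⥤ C`, sending
`([n], σ)` to `σ(n)` and a morphism `a : ([n], σ) ⟶ ([m], τ)` to
`τ(a(n) ≤ m) : σ(n) → τ(m)`, exhibits `C` as the localization of `Δ/N(C)` at the class of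
last-vertex morphisms. -/
theorem lastVertex_functor_isLocalization (C : Type w) [Category.{v'} C] :
    ∃ (L : SplxOver (nerve C) ⥤ C) (h : ∀ A : SplxOver (nerve C),
        L.obj A = A.simplex.obj (Fin.last A.obj.len)),
      (∀ (A B : SplxOver (nerve C)) (f : A ⟶ B),
        L.map f = eqToHom (h A) ≫ eqToHom (nerve_simplex_obj_eq f) ≫
          B.simplex.map (homOfLE (Fin.le_last _)) ≫ eqToHom (h B).symm) ∧
      L.IsLocalization (lastVertex (nerve C)) :=
  ⟨SplxOver.lastVertexFunctor C, fun _ => rfl,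
    fun _ _ _ => ((Category.id_comp _).trans (congrArg (_ ≫ ·) (Category.comp_id _))).symm,
    SplxOver.isLocalization_lastVertexFunctor C⟩
end

section
/- For every simplicial set X, there is an equivalence of categories between the 1-categorical localization (Δ/X)[lv⁻¹] of the category of simplices of X at the last-vertex morphisms and the homotopy category hoFunctor.obj X (the value at X of the left adjoint of the nerve functor Cat ⥤ SSet). -/
open CategoryTheory Simplicial

universe u

/-!
Let `L : Δ/X ⥤ ho X` send a simplex to its last vertex and `a : ([n], x) ⟶ ([m], y)` to the edge
of `y` from `a(n)` to `m`. This edge is degenerate when `a` preserves the last vertex, so `L`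
inverts `lv`. Conversely, an edge `e : v → w` of `X` gives morphisms `v ⟶ e ⟵ w` of `Δ/X`, the
second of which is in `lv`, so a functor `F` inverting `lv` has a value on `e`; the 2-simplices
make these values functorial, which yields `F' : ho X ⥤ E`. The inclusions of the last vertices
form an isomorphism `L ⋙ F' ≅ F`. Finally, `L` sends the zigzag `v ⟶ e ⟵ w` back to `e`, so that
functors out of `ho X` with isomorphic restrictions along `L` are isomorphic. Hence `L` is a
localization at `lv`.
-/

section Localization

variable {C D : Type*} [Category* C] [Category* D] {W : MorphismProperty C} {L : C ⥤ D}

theorem isLocalization_of_comp_iso_Q (hL : W.IsInvertedBy L) {S : D ⥤ W.Localization}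
    (e : L ⋙ S ≅ W.Q) (hD : ∀ G : D ⥤ D, Nonempty (L ⋙ G ≅ L) → Nonempty (G ≅ 𝟭 D)) :
    L.IsLocalization W where
  inverts := hL
  isEquivalence := by
    let T := Localization.Construction.lift L hL
    let fac : W.Q ⋙ T ≅ L := eqToIso (Localization.Construction.fac L hL)
    let unitIso : 𝟭 W.Localization ≅ T ⋙ S :=
      Localization.liftNatIso W.Q W W.Q (W.Q ⋙ T ⋙ S) _ _
        (e.symm ≪≫ Functor.isoWhiskerRight fac.symm S)
    obtain ⟨counitIso⟩ := hD (S ⋙ T) ⟨Functor.isoWhiskerRight e T ≪≫ fac⟩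
    exact (CategoryTheory.Equivalence.mk T S unitIso counitIso).isEquivalence_functor

end Localization

variable {X : SSet.{u}}

/-- The homotopy category of a simplicial set, in the model given by the vertices and
edges of its 2-truncation; it is definitionally the value of `SSet.hoFunctor`. -/
abbrev HomotopyCat (X : SSet.{u}) : Type u := ((SSet.truncation 2).obj X).HomotopyCategory

namespace HomotopyCat

open SSet.Truncated.HomotopyCategory

/-- The object of the homotopy category given by a vertex. It only serves to state things for
vertices of `X` rather than of its truncation. -/
def ofVertex (x : X _⦋0⦌) : HomotopyCat X := mk (V := (SSet.truncation 2).obj X) x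

/-- The homotopy class of an edge, for edges of `X` rather than of its truncation. -/
def ofEdge {x y : X _⦋0⦌} (e : SSet.Edge x y) : ofVertex x ⟶ ofVertex y := homMk e.toTruncated

lemma ofEdge_comp_ofEdge {x y z : X _⦋0⦌} {e : SSet.Edge x y} {e' : SSet.Edge y z}
    {e'' : SSet.Edge x z} (t : SSet.Edge.CompStruct e e' e'') :
    ofEdge e ≫ ofEdge e' = ofEdge e'' :=
  homMk_comp_homMk t.toTruncated

lemma ofEdge_eq_of_edge_eq {x y x' y' : X _⦋0⦌} {e : SSet.Edge x y} {e' : SSet.Edge x' y'}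
    (h : e.edge = e'.edge) (hx : x = x') (hy : y = y') :
    ofEdge e = eqToHom (congrArg ofVertex hx) ≫ ofEdge e' ≫
      eqToHom (congrArg ofVertex hy.symm) := by
  subst hx hy
  obtain rfl := SSet.Edge.ext h
  simp

lemma ofEdge_eq_eqToHom {x y : X _⦋0⦌} {e : SSet.Edge x y} (h : x = y)
    (he : e.edge = X.σ 0 y) : ofEdge e = eqToHom (congrArg ofVertex h) := by
  have ofEdge_id : ofEdge (.id y) = 𝟙 _ := homMk_id (V := (SSet.truncation 2).obj X) y
  simp [ofEdge_eq_of_edge_eq (e' := .id y) he h rfl, ofEdge_id]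

end HomotopyCat

namespace SplxOver

@[ext]
lemma hom_ext {A B : SplxOver X} {f g : A ⟶ B} (h : f.map = g.map) : f = g :=
  Hom.ext h

/-- A vertex of `X` as an object of `Δ/X`. -/
def ofVertex (x : X _⦋0⦌) : SplxOver X := ⟨⦋0⦌, x⟩

/-- An edge of `X` as an object of `Δ/X`. -/
def ofEdge {x y : X _⦋0⦌} (e : SSet.Edge x y) : SplxOver X := ⟨⦋1⦌, e.edge⟩

/-- The inclusion of the source of an edge, as a morphism of `Δ/X`. -/
def src {x y : X _⦋0⦌} (e : SSet.Edge x y) : ofVertex x ⟶ ofEdge e :=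
  ⟨SimplexCategory.δ 1, e.src_eq⟩

/-- The inclusion of the target of an edge, as a morphism of `Δ/X`. -/
def tgt {x y : X _⦋0⦌} (e : SSet.Edge x y) : ofVertex y ⟶ ofEdge e :=
  ⟨SimplexCategory.δ 0, e.tgt_eq⟩

lemma lastVertex_tgt {x y : X _⦋0⦌} (e : SSet.Edge x y) : lastVertex X (tgt e) := rfl

/-- The last vertex of a simplex. -/
def last (A : SplxOver X) : X _⦋0⦌ :=
  X.map (SimplexCategory.const ⦋0⦌ A.obj (Fin.last _)).op A.simplex

/-- The inclusion of the last vertex of a simplex, as a morphism of `Δ/X`. -/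
def fromLast (A : SplxOver X) : ofVertex A.last ⟶ A :=
  ⟨SimplexCategory.const ⦋0⦌ A.obj (Fin.last _), rfl⟩

lemma lastVertex_fromLast (A : SplxOver X) : lastVertex X A.fromLast := rfl

lemma last_ofVertex (x : X _⦋0⦌) : (ofVertex x).last = x := by
  have h : SimplexCategory.const ⦋0⦌ ⦋0⦌ (Fin.last _) = 𝟙 _ := SimplexCategory.hom_zero_zero _
  simp only [last, ofVertex, h]
  exact Functor.map_id_apply X _ x

/-- The edge of `[m]` from the image of the last vertex of `[n]` to the last vertex of `[m]`. -/
def toLast {n m : SimplexCategory} (a : n ⟶ m) : ⦋1⦌ ⟶ m :=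
  SimplexCategory.mkOfLe (n := m.len) (a.toOrderHom (Fin.last _)) (Fin.last _) (Fin.le_last _)

lemma δ_one_comp_toLast {n m : SimplexCategory} (a : n ⟶ m) :
    SimplexCategory.δ 1 ≫ toLast a = SimplexCategory.const ⦋0⦌ n (Fin.last _) ≫ a :=
  SimplexCategory.Hom.ext_zero_left _ _

lemma δ_zero_comp_toLast {n m : SimplexCategory} (a : n ⟶ m) :
    SimplexCategory.δ 0 ≫ toLast a = SimplexCategory.const ⦋0⦌ m (Fin.last _) :=
  SimplexCategory.Hom.ext_zero_left _ _

lemma toLast_eq_of_apply_last {n m : SimplexCategory} {a : n ⟶ m}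
    (ha : a.toOrderHom (Fin.last _) = Fin.last _) :
    toLast a = SimplexCategory.σ 0 ≫ SimplexCategory.const ⦋0⦌ m (Fin.last _) :=
  SimplexCategory.Hom.ext_one_left _ _ ha rfl

/-- The edge of `X` that a morphism `f : A ⟶ B` of `Δ/X` cuts out of the simplex `B`: it runs
from the last vertex of `A` to that of `B`. -/
def lastEdge {A B : SplxOver X} (f : A ⟶ B) : SSet.Edge A.last B.last :=
  .mk (X.map (toLast f.map).op B.simplex)
    (by
      rw [last, ← f.fac]
      simp only [SimplicialObject.δ, ← Functor.map_comp_apply, ← op_comp,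
        δ_one_comp_toLast])
    (by
      simp only [last, SimplicialObject.δ, ← Functor.map_comp_apply, ← op_comp,
        δ_zero_comp_toLast])

lemma lastEdge_edge {A B : SplxOver X} (f : A ⟶ B) :
    (lastEdge f).edge = X.map (toLast f.map).op B.simplex := rfl

/-- The triangle witnessing that `lastEdge` is functorial. -/
def lastTriangle {A B C : SplxOver X} (f : A ⟶ B) (g : B ⟶ C) :
    SSet.Edge.CompStruct (lastEdge f) (lastEdge g) (lastEdge (f ≫ g)) :=
  let c : ⦋2⦌ ⟶ C.obj := SimplexCategory.mkOfLeComp (n := C.obj.len)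
    (g.map.toOrderHom (f.map.toOrderHom (Fin.last _))) (g.map.toOrderHom (Fin.last _)) (Fin.last _)
    (g.map.toOrderHom.monotone (Fin.le_last _)) (Fin.le_last _)
  .mk (X.map c.op C.simplex)
    (by
      have h : SimplexCategory.δ 2 ≫ c = toLast f.map ≫ g.map :=
        SimplexCategory.Hom.ext_one_left _ _
      simp only [lastEdge_edge, ← g.fac, SimplicialObject.δ,
        ← Functor.map_comp_apply, ← op_comp, h])
    (by
      have h : SimplexCategory.δ 0 ≫ c = toLast g.map := SimplexCategory.Hom.ext_one_left _ _
      simp only [lastEdge_edge, SimplicialObject.δ, ← Functor.map_comp_apply, ← op_comp, h])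
    (by
      have h : SimplexCategory.δ 1 ≫ c = toLast (f ≫ g).map :=
        SimplexCategory.Hom.ext_one_left _ _
      simp only [lastEdge_edge, SimplicialObject.δ, ← Functor.map_comp_apply, ← op_comp, h])

lemma last_eq_of_lastVertex {A B : SplxOver X} {f : A ⟶ B} (hf : lastVertex X f) :
    A.last = B.last := by
  have h : SimplexCategory.const ⦋0⦌ A.obj (Fin.last _) ≫ f.map =
      SimplexCategory.const ⦋0⦌ B.obj (Fin.last _) := SimplexCategory.Hom.ext_zero_left _ _ hf
  rw [last, ← f.fac, ← Functor.map_comp_apply, ← op_comp, h, last]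

lemma ofEdge_lastEdge_of_lastVertex {A B : SplxOver X} {f : A ⟶ B} (hf : lastVertex X f) :
    HomotopyCat.ofEdge (lastEdge f) =
      eqToHom (congrArg HomotopyCat.ofVertex (last_eq_of_lastVertex hf)) := by
  refine HomotopyCat.ofEdge_eq_eqToHom (last_eq_of_lastVertex hf) ?_
  rw [lastEdge_edge, toLast_eq_of_apply_last hf, op_comp, Functor.map_comp_apply]
  rfl

lemma ofEdge_lastEdge_src {x y : X _⦋0⦌} (e : SSet.Edge x y) :
    HomotopyCat.ofEdge (lastEdge (src e)) =
      eqToHom (congrArg HomotopyCat.ofVertex (last_ofVertex x)) ≫ HomotopyCat.ofEdge e ≫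
        eqToHom (congrArg HomotopyCat.ofVertex (last_ofVertex y).symm) ≫
          HomotopyCat.ofEdge (lastEdge (tgt e)) := by
  have toLast_src : toLast (src e).map = 𝟙 ⦋1⦌ := SimplexCategory.Hom.ext_one_left _ _
  have edge_eq : (lastEdge (src e)).edge = e.edge := by
    rw [lastEdge_edge, toLast_src]
    exact Functor.map_id_apply X _ e.edge
  have last_eq : (ofEdge e).last = y :=
    (last_eq_of_lastVertex (lastVertex_tgt e)).symm.trans (last_ofVertex y)
  rw [ofEdge_lastEdge_of_lastVertex (lastVertex_tgt e), eqToHom_trans]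
  exact HomotopyCat.ofEdge_eq_of_edge_eq edge_eq (last_ofVertex x) last_eq

end SplxOver

open SplxOver

/-- The functor `Δ/X ⥤ ho X` sending a simplex to its last vertex. -/
def lastVertexFunctor (X : SSet.{u}) : SplxOver X ⥤ HomotopyCat X where
  obj A := HomotopyCat.ofVertex A.last
  map f := HomotopyCat.ofEdge (lastEdge f)
  map_id A := ofEdge_lastEdge_of_lastVertex (f := 𝟙 A) rfl
  map_comp f g := (HomotopyCat.ofEdge_comp_ofEdge (lastTriangle f g)).symm

namespace lastVertexFunctor

lemma isInvertedBy : (lastVertex X).IsInvertedBy (lastVertexFunctor X) := by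
  intro A B f hf
  change IsIso (HomotopyCat.ofEdge (lastEdge f))
  rw [ofEdge_lastEdge_of_lastVertex hf]
  infer_instance

/-- The identification of the image of a vertex of `X` under `lastVertexFunctor X` with the same
vertex of `ho X`; they agree only up to the functoriality of `X`. -/
def objOfVertex (x : X _⦋0⦌) :
    (lastVertexFunctor X).obj (ofVertex x) ≅ HomotopyCat.ofVertex x :=
  eqToIso (congrArg HomotopyCat.ofVertex (last_ofVertex x))

lemma map_src {x y : X _⦋0⦌} (e : SSet.Edge x y) :
    (lastVertexFunctor X).map (src e) =
      (objOfVertex x).hom ≫ HomotopyCat.ofEdge e ≫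
        (objOfVertex y).inv ≫ (lastVertexFunctor X).map (tgt e) :=
  ofEdge_lastEdge_src e

section UniversalProperty

variable {E : Type*} [Category* E]

section Descend

variable {F : SplxOver X ⥤ E} (hF : (lastVertex X).IsInvertedBy F)

/-- The value on an edge of the functor `ho X ⥤ E` induced by `F`. -/
noncomputable def edgeMap {x y : X _⦋0⦌} (e : SSet.Edge x y) :
    F.obj (ofVertex x) ⟶ F.obj (ofVertex y) :=
  haveI := hF (tgt e) (lastVertex_tgt e)
  F.map (src e) ≫ inv (F.map (tgt e))

lemma edgeMap_comp_map {x y : X _⦋0⦌} (e : SSet.Edge x y) {A : SplxOver X} (g : ofEdge e ⟶ A) :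
    edgeMap hF e ≫ F.map (tgt e ≫ g) = F.map (src e ≫ g) := by
  have := hF (tgt e) (lastVertex_tgt e)
  simp [edgeMap]

lemma edgeMap_id (x : X _⦋0⦌) : edgeMap hF (.id x) = 𝟙 _ := by
  let g : ofEdge (.id x) ⟶ ofVertex x := ⟨SimplexCategory.σ 0, rfl⟩
  have hsrc : src (.id x) ≫ g = 𝟙 _ := by ext1; exact SimplexCategory.hom_zero_zero _
  have htgt : tgt (.id x) ≫ g = 𝟙 _ := by ext1; exact SimplexCategory.hom_zero_zero _
  simpa [hsrc, htgt] using edgeMap_comp_map hF (.id x) g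

lemma edgeMap_comp_edgeMap {x y z : X _⦋0⦌} {e : SSet.Edge x y} {e' : SSet.Edge y z}
    {e'' : SSet.Edge x z} (t : SSet.Edge.CompStruct e e' e'') :
    edgeMap hF e ≫ edgeMap hF e' = edgeMap hF e'' := by
  let T : SplxOver X := ⟨⦋2⦌, t.simplex⟩
  let g : ofEdge e ⟶ T := ⟨SimplexCategory.δ 2, t.d₂⟩
  let g' : ofEdge e' ⟶ T := ⟨SimplexCategory.δ 0, t.d₀⟩
  let g'' : ofEdge e'' ⟶ T := ⟨SimplexCategory.δ 1, t.d₁⟩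
  have hx : src e'' ≫ g'' = src e ≫ g := by ext1; exact SimplexCategory.Hom.ext_zero_left _ _
  have hy : src e' ≫ g' = tgt e ≫ g := by ext1; exact SimplexCategory.Hom.ext_zero_left _ _
  have hz : tgt e' ≫ g' = tgt e'' ≫ g'' := by ext1; exact SimplexCategory.Hom.ext_zero_left _ _
  have : IsIso (F.map (tgt e'' ≫ g'')) := hF _ rfl
  rw [← cancel_mono (F.map (tgt e'' ≫ g''))]
  calc (edgeMap hF e ≫ edgeMap hF e') ≫ F.map (tgt e'' ≫ g'')
    _ = edgeMap hF e ≫ edgeMap hF e' ≫ F.map (tgt e' ≫ g') := by rw [hz, Category.assoc]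
    _ = edgeMap hF e ≫ F.map (tgt e ≫ g) := by rw [edgeMap_comp_map, hy]
    _ = F.map (src e'' ≫ g'') := by rw [edgeMap_comp_map, hx]
    _ = edgeMap hF e'' ≫ F.map (tgt e'' ≫ g'') := (edgeMap_comp_map hF e'' g'').symm

/-- The functor `ho X ⥤ E` induced by a functor `F : Δ/X ⥤ E` inverting the last-vertex
morphisms. -/
noncomputable def descend : HomotopyCat X ⥤ E :=
  SSet.Truncated.HomotopyCategory.lift (V := (SSet.truncation 2).obj X)
    (fun x ↦ F.obj (ofVertex x)) (fun e ↦ edgeMap hF (.ofTruncated e)) (edgeMap_id hF)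
    (fun t ↦ edgeMap_comp_edgeMap hF (.ofTruncated t))

lemma descend_map_ofEdge {x y : X _⦋0⦌} (e : SSet.Edge x y) :
    (descend hF).map (HomotopyCat.ofEdge e) = edgeMap hF e :=
  SSet.Truncated.HomotopyCategory.lift_map_homMk (V := (SSet.truncation 2).obj X) _ _
    (edgeMap_id hF) (fun t ↦ edgeMap_comp_edgeMap hF (.ofTruncated t)) _

/-- `descend hF` extends `F` along `lastVertexFunctor X`: the isomorphism at a simplex is the image
under `F` of the inclusion of its last vertex. -/
noncomputable def compDescend : lastVertexFunctor X ⋙ descend hF ≅ F :=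
  let φ (A : SplxOver X) : F.obj (ofVertex A.last) ≅ F.obj A :=
    haveI := hF _ A.lastVertex_fromLast
    asIso (F.map A.fromLast)
  NatIso.ofComponents φ (fun {A B} f ↦ by
    let g : ofEdge (lastEdge f) ⟶ B := ⟨toLast f.map, rfl⟩
    have hsrc : src (lastEdge f) ≫ g = A.fromLast ≫ f := by
      ext1; exact δ_one_comp_toLast f.map
    have htgt : tgt (lastEdge f) ≫ g = B.fromLast := by
      ext1; exact δ_zero_comp_toLast f.map
    change (descend hF).map (HomotopyCat.ofEdge (lastEdge f)) ≫ F.map B.fromLast =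
      F.map A.fromLast ≫ F.map f
    have h := edgeMap_comp_map hF (lastEdge f) g
    rw [hsrc, htgt, F.map_comp] at h
    rw [descend_map_ofEdge]
    exact h)

end Descend

/-- Functors out of `ho X` are determined up to isomorphism by their restriction along
`lastVertexFunctor X`. -/
def natIsoOfComp {G₁ G₂ : HomotopyCat X ⥤ E}
    (α : lastVertexFunctor X ⋙ G₁ ≅ lastVertexFunctor X ⋙ G₂) : G₁ ≅ G₂ :=
  let θ (x : X _⦋0⦌) := objOfVertex x
  let φ (x : X _⦋0⦌) : G₁.obj (HomotopyCat.ofVertex x) ≅ G₂.obj (HomotopyCat.ofVertex x) :=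
    G₁.mapIso (θ x).symm ≪≫ α.app (ofVertex x) ≪≫ G₂.mapIso (θ x)
  have naturality {x y : X _⦋0⦌} (e : SSet.Edge x y) :
      G₁.map (HomotopyCat.ofEdge e) ≫ (φ y).hom = (φ x).hom ≫ G₂.map (HomotopyCat.ofEdge e) := by
    have : IsIso ((lastVertexFunctor X).map (tgt e)) :=
      isInvertedBy _ (lastVertex_tgt e)
    have hsrc := α.hom.naturality (src e)
    have htgt := α.hom.naturality (tgt e)
    rw [← cancel_epi (G₁.map (θ x).hom),
      ← cancel_mono (G₂.map ((θ y).inv ≫ (lastVertexFunctor X).map (tgt e)))]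
    simp only [Functor.comp_map, map_src, Functor.map_comp] at hsrc htgt
    simpa [φ, ← htgt] using hsrc
  SSet.Truncated.HomotopyCategory.mkNatIso (V := (SSet.truncation 2).obj X) φ
    (fun _ _ e ↦ naturality (.ofTruncated e))

end UniversalProperty

theorem isLocalization :
    (lastVertexFunctor X).IsLocalization (lastVertex X) :=
  isLocalization_of_comp_iso_Q isInvertedBy
    (compDescend (lastVertex X).Q_inverts)
    (fun _ ⟨α⟩ ↦ ⟨natIsoOfComp (α ≪≫ (Functor.rightUnitor _).symm)⟩)

end lastVertexFunctor

theorem localization_equiv_hoFunctor_general (ho : SSet.{u} ⥤ Cat.{u, u})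
    (adj : ho ⊣ nerveFunctor) (X : SSet.{u}) :
    Nonempty ((lastVertex X).Localization ≌ ho.obj X) := by
  have := lastVertexFunctor.isLocalization (X := X)
  let e : SSet.hoFunctor.obj X ≅ ho.obj X := (nerveAdjunction.leftAdjointUniq adj).app X
  exact ⟨(Localization.equivalenceFromModel (lastVertexFunctor X) (lastVertex X)).trans
    (Cat.equivOfIso e)⟩

/-- for every simplicial set `X`, the localization `(Δ/X)[lv⁻¹]` of the
category of simplices of `X` at the last-vertex morphisms is equivalent to the homotopy
category of `X`, i.e. to the value at `X` of (any) left adjoint of the nerve functor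
`Cat ⥤ SSet`. -/
theorem localization_equiv_hoFunctor (ho : SSet.{0} ⥤ Cat.{0, 0})
    (adj : ho ⊣ nerveFunctor) (X : SSet.{0}) :
    Nonempty ((lastVertex X).Localization ≌ ho.obj X) :=
  localization_equiv_hoFunctor_general ho adj X
end
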